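/- Let t⁰ = (t⁰_1,…,t⁰_m) be a solution of the Bethe ansatz equations for the triple (z; μ; V[ν]), where ν = M − 2m. Then for every s = 1,…,n the Bethe vector is an eigenvector of the trigonometric Gaudin operator: K_s(z,μ)·ω(t⁰,z) = k_s(t⁰,z,μ)·ω(t⁰,z), where k_s(t⁰,z,μ) = (m_s/2)·[(μ − ν/2 + m_s/2) + Σ_{p≠s} m_p·z_s/(z_s − z_p) + 2·Σ_{i=1}^m z_s/(t⁰_i − z_s)]. -/

import Mathlib

open Complex Finset

namespace Paper

noncomputable section

variable {n : ℕ}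

/-- The index set of the natural basis of `V = V_{m 0} ⊗ ⋯ ⊗ V_{m (n-1)}`:
the basis vector `v_{i_1} ⊗ ⋯ ⊗ v_{i_n}` corresponds to the index `(i_1,…,i_n)`. -/
abbrev Idx (m : Fin n → ℕ) := ∀ s : Fin n, Fin (m s + 1)

/-- The tensor product `V = V_{m 0} ⊗ ⋯ ⊗ V_{m (n-1)}` realized concretely as the space of
ℂ-valued functions on the index set of its natural basis. -/
abbrev TV (m : Fin n → ℕ) := Idx m → ℂ

/-- The linear operator `f ↦ (i ↦ c i * f (g i))`; all the basic operators below are of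
this form. -/
def mulShift {ι : Type*} (c : ι → ℂ) (g : ι → ι) : Module.End ℂ (ι → ℂ) where
  toFun f i := c i * f (g i)
  map_add' f h := by funext i; simp [mul_add]
  map_smul' a f := by
    funext i
    simp only [Pi.smul_apply, smul_eq_mul, RingHom.id_apply]
    ring

variable (m : Fin n → ℕ)

/-- `e11` acting in the `s`-th tensor factor: `e11 · v_k = ((m-2k)/2) v_k`. -/
def E11 (s : Fin n) : Module.End ℂ (TV m) :=
  mulShift (fun idx => ((m s : ℂ) - 2 * ((idx s : ℕ) : ℂ)) / 2) id

/-- `e22` acting in the `s`-th tensor factor: `e22 · v_k = -((m-2k)/2) v_k`. -/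
def E22 (s : Fin n) : Module.End ℂ (TV m) :=
  mulShift (fun idx => -(((m s : ℂ) - 2 * ((idx s : ℕ) : ℂ)) / 2)) id

/-- `e21` acting in the `s`-th tensor factor: `e21 · v_k = (k+1) v_{k+1}`. -/
def E21 (s : Fin n) : Module.End ℂ (TV m) :=
  mulShift (fun idx => ((idx s : ℕ) : ℂ)) (fun idx => Function.update idx s (idx s - 1))

/-- `e12` acting in the `s`-th tensor factor: `e12 · v_k = (m-k+1) v_{k-1}`. -/
def E12 (s : Fin n) : Module.End ℂ (TV m) :=
  mulShift (fun idx => (m s : ℂ) - ((idx s : ℕ) : ℂ)) (fun idx => Function.update idx s (idx s + 1))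

/-- The diagonal action `e11 = Σ_s e11^{(s)}` on the tensor product. -/
def e11T : Module.End ℂ (TV m) := ∑ s, E11 m s
def e22T : Module.End ℂ (TV m) := ∑ s, E22 m s
def e21T : Module.End ℂ (TV m) := ∑ s, E21 m s
def e12T : Module.End ℂ (TV m) := ∑ s, E12 m s

/-- `v ∈ V[ν]`, i.e. `(e11 - e22) v = ν v`. -/
def inWt (ν : ℤ) (v : TV m) : Prop := (e11T m - e22T m) v = ((ν : ℤ) : ℂ) • v

/-- The Weyl involution `σ`, acting by `σ v_k = (-1)^k v_{m-k}` in each factor. -/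
def sigmaOp : Module.End ℂ (TV m) :=
  mulShift (fun idx => ∏ s, (-1 : ℂ) ^ (m s - (idx s : ℕ))) (fun idx s => (idx s).rev)

/-- The weight of a basis vector: `wt(i) = Σ_s (m_s - 2 i_s)`. -/
def wt (idx : Idx m) : ℤ := ∑ s, ((m s : ℤ) - 2 * ((idx s : ℕ) : ℤ))

/-- The operator `p(κ) = Σ_{k ≥ 0} e21^k e12^k (1/k!) Π_{j=0}^{k-1} (κ + e22 - e11 - j)^{-1}`.
The operator `e22 - e11` is diagonal in the chosen basis with eigenvalue `-wt(idx)` on the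
basis vector labelled by `idx`, so the (partial) inverses `(κ + e22 - e11 - j)^{-1}` are the
diagonal operators with entries `(κ - wt(idx) - j)⁻¹`.  The sum is finite on `V` since
`e12` is nilpotent:  `e12^k = 0` for `k > M = Σ_s m_s`. -/
def pOp (κ : ℂ) : Module.End ℂ (TV m) :=
  ∑ k ∈ Finset.range ((∑ s, m s) + 1),
    (e21T m) ^ k * (e12T m) ^ k *
      mulShift (fun idx => ((k.factorial : ℂ))⁻¹ *
        ∏ j ∈ Finset.range k, (κ - ((wt m idx : ℤ) : ℂ) - (j : ℂ))⁻¹) id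

/-- The operator `𝒜(κ) = σ ∘ p(κ)`. -/
def Aop (κ : ℂ) : Module.End ℂ (TV m) := sigmaOp m * pOp m κ

/-- `Ω₀^{(s,t)} = e11^{(s)} e11^{(t)} + e22^{(s)} e22^{(t)}`. -/
def Om0 (s t : Fin n) : Module.End ℂ (TV m) := E11 m s * E11 m t + E22 m s * E22 m t

/-- `Ω₁₂^{(s,t)} = e12^{(s)} e21^{(t)}`. -/
def Om12 (s t : Fin n) : Module.End ℂ (TV m) := E12 m s * E21 m t

/-- `Ω₂₁^{(s,t)} = e21^{(s)} e12^{(t)}`. -/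
def Om21 (s t : Fin n) : Module.End ℂ (TV m) := E21 m s * E12 m t

/-- The trigonometric r-matrix `r^{(s,t)}(x) = (Ω₊ x + Ω₋)/(x-1)` acting in the `s`-th and
`t`-th tensor factors, where `Ω₊ = ½Ω₀ + Ω₁₂` and `Ω₋ = ½Ω₀ + Ω₂₁`. -/
def rOp (s t : Fin n) (x : ℂ) : Module.End ℂ (TV m) :=
  (x - 1)⁻¹ • (x • ((2 : ℂ)⁻¹ • Om0 m s t + Om12 m s t) + ((2 : ℂ)⁻¹ • Om0 m s t + Om21 m s t))

/-- The trigonometric Gaudin operators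
`K_s(z,μ) = (μ/2)(e11-e22)^{(s)} + Σ_{t ≠ s} r^{(s,t)}(z_s/z_t)`. -/
def Kop (z : Fin n → ℂ) (μ : ℂ) (s : Fin n) : Module.End ℂ (TV m) :=
  (μ / 2) • (E11 m s - E22 m s) + ∑ t ∈ Finset.univ.erase s, rOp m s t (z s / z t)

/-- The matrix entry `M₁₁(x) = 2πi Σ_s (1-x/z_s)⁻¹ e11^{(s)} - πi e11`. -/
def M11 (z : Fin n → ℂ) (x : ℂ) : Module.End ℂ (TV m) :=
  (2 * (Real.pi : ℂ) * I) • (∑ s, (1 - x / z s)⁻¹ • E11 m s) - ((Real.pi : ℂ) * I) • e11T m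

/-- `M₁₂(x) = 2πi Σ_s (1-x/z_s)⁻¹ e21^{(s)} - 2πi e21`. -/
def M12 (z : Fin n → ℂ) (x : ℂ) : Module.End ℂ (TV m) :=
  (2 * (Real.pi : ℂ) * I) • (∑ s, (1 - x / z s)⁻¹ • E21 m s) -
    (2 * (Real.pi : ℂ) * I) • e21T m

/-- `M₂₁(x) = 2πi Σ_s (1-x/z_s)⁻¹ e12^{(s)}`. -/
def M21 (z : Fin n → ℂ) (x : ℂ) : Module.End ℂ (TV m) :=
  (2 * (Real.pi : ℂ) * I) • (∑ s, (1 - x / z s)⁻¹ • E12 m s)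

/-- `M₂₂(x) = 2πi Σ_s (1-x/z_s)⁻¹ e22^{(s)} - πi e22`. -/
def M22 (z : Fin n → ℂ) (x : ℂ) : Module.End ℂ (TV m) :=
  (2 * (Real.pi : ℂ) * I) • (∑ s, (1 - x / z s)⁻¹ • E22 m s) - ((Real.pi : ℂ) * I) • e22T m

/-- The derivative `(dM₂₂/dx)(x) = 2πi Σ_s z_s⁻¹ (1-x/z_s)⁻² e22^{(s)}`. -/
def M22d (z : Fin n → ℂ) (x : ℂ) : Module.End ℂ (TV m) :=
  (2 * (Real.pi : ℂ) * I) • (∑ s, ((z s)⁻¹ * ((1 - x / z s)⁻¹) ^ 2) • E22 m s)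

/-- The coefficient `D₂(x)` of the universal differential operator
`𝒟 = cdet [[∂_u - πiμ + M₁₁, M₁₂],[M₂₁, ∂_u + πiμ + M₂₂]] = ∂_u² + D₁(x) ∂_u + D₂(x)`
(where `x = e^{-2πiu}`, `∂_u = -2πi x ∂_x`), namely
`D₂(x) = (-πiμ + M₁₁(x)) ∘ (πiμ + M₂₂(x)) - 2πi x (dM₂₂/dx)(x) - M₂₁(x) ∘ M₁₂(x)`. -/
def D2 (z : Fin n → ℂ) (μ : ℂ) (x : ℂ) : Module.End ℂ (TV m) :=
  (-(((Real.pi : ℂ) * I * μ)) • (1 : Module.End ℂ (TV m)) + M11 m z x) *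
      ((((Real.pi : ℂ) * I * μ)) • (1 : Module.End ℂ (TV m)) + M22 m z x)
    - (2 * (Real.pi : ℂ) * I * x) • M22d m z x
    - M21 m z x * M12 m z x

/-- The Bethe ansatz equations for the triple `(z; μ; V[ν])`, `ν = M - 2m'`:  `t` is a tuple
of pairwise distinct complex numbers, each nonzero and distinct from every `z_s`, with
`(1 - μ + ν/2)/t_i + Σ_{j≠i} 2/(t_i - t_j) - Σ_s m_s/(t_i - z_s) = 0` for all `i`. -/
def BAE (z : Fin n → ℂ) (μ : ℂ) {m' : ℕ} (t : Fin m' → ℂ) : Prop :=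
  Function.Injective t ∧ (∀ i, t i ≠ 0) ∧ (∀ i s, t i ≠ z s) ∧
    ∀ i, (1 - μ + ((∑ s, (m s : ℂ)) - 2 * (m' : ℂ)) / 2) / t i
        + (∑ j ∈ Finset.univ.erase i, 2 / (t i - t j))
        - ∑ s, (m s : ℂ) / (t i - z s) = 0

/-- The partial sum `ℓ_1 + ⋯ + ℓ_{s-1}` (0-based). -/
def pref (ℓv : Idx m) (s : Fin n) : ℕ :=
  ∑ u ∈ Finset.univ.filter (fun u => u < s), (ℓv u : ℕ)

/-- Extension of a tuple `t : Fin m' → ℂ` to a function on `ℕ` (by zero). -/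
def extt {m' : ℕ} (t : Fin m' → ℂ) : ℕ → ℂ := fun i => if h : i < m' then t ⟨i, h⟩ else 0

/-- The coordinate `ω_ℓ(t,z) = Σ_{ρ ∈ S_{m'}} Π_{s=1}^n Π_{i=ℓ_1+⋯+ℓ_{s-1}+1}^{ℓ_1+⋯+ℓ_s}
(t_{ρ(i)} - z_s)⁻¹` of the weight function. -/
def omegaCoeff (z : Fin n → ℂ) {m' : ℕ} (t : Fin m' → ℂ) (ℓv : Idx m) : ℂ :=
  ∑ ρ : Equiv.Perm (Fin m'), ∏ s : Fin n,
    ∏ i ∈ Finset.Ico (pref m ℓv s) (pref m ℓv s + (ℓv s : ℕ)), (extt (t ∘ ρ) i - z s)⁻¹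

/-- The Bethe vector (weight function) `ω(t,z) = Σ_{ℓ ∈ C} ω_ℓ(t,z) v_ℓ ∈ V[M - 2m']`. -/
def betheVec (z : Fin n → ℂ) {m' : ℕ} (t : Fin m' → ℂ) : TV m :=
  fun ℓv => if (∑ s, ((ℓv s : ℕ))) = m' then omegaCoeff m z t ℓv else 0

/-- The eigenvalue `k_s(t,z,μ) = (m_s/2)[(μ - ν/2 + m_s/2) + Σ_{p≠s} m_p z_s/(z_s-z_p)
+ 2 Σ_i z_s/(t_i - z_s)]`, with `ν = M - 2m'`. -/
def kEig (z : Fin n → ℂ) (μ : ℂ) {m' : ℕ} (t : Fin m' → ℂ) (s : Fin n) : ℂ :=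
  ((m s : ℂ) / 2) * ((μ - ((∑ u, (m u : ℂ)) - 2 * (m' : ℂ)) / 2 + (m s : ℂ) / 2)
    + (∑ p ∈ Finset.univ.erase s, (m p : ℂ) * z s / (z s - z p))
    + 2 * ∑ i, z s / (t i - z s))

/-- The scalar eigenvalue function `E₂(x, t, z, μ)` of `D₂(x)` on the Bethe vector, i.e.
the coefficient of the fundamental differential operator `ℰ = ∂_u² + E₂(x)`. -/
def E2fun (z : Fin n → ℂ) (μ : ℂ) {m' : ℕ} (t : Fin m' → ℂ) (x : ℂ) : ℂ :=
  (2 * (Real.pi : ℂ) * I) ^ 2 *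
    (-(μ + ((∑ u, (m u : ℂ)) - 2 * (m' : ℂ)) / 2) ^ 2 / 4
      + ∑ s, (((m s : ℂ) * ((m s : ℂ) + 2) / 4 + kEig m z μ t s) / (1 - x / z s)
          - ((m s : ℂ) * ((m s : ℂ) + 2) / 4) / (1 - x / z s) ^ 2))

/-!
`V` is a quotient of a tensor product of Verma modules, and the latter is a polynomial ring with
one variable `x_s` per factor, on which `e21` acts by multiplication by `x_s` while `e11` and `e12`
are differential operators of order one and two. The coefficients of a product of linear forms are
permanents, so the Bethe vector is the image of `∏ i, L_i`, where `L_i = ∑ s, x_s / (t_i - z_s)`.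
By the Leibniz rule the Gaudin operator maps `∏ i, L_i` to a multiple of itself plus a combination
of the products in which one `L_i` is replaced by `x_s`. Two partial fraction identities for the
kernel `(u + v) / (u - v)` give the coefficients, and those of the unwanted products vanish exactly
when the Bethe ansatz equations, multiplied by `t_i`, hold.
-/

section Permanent

open MvPolynomial
open scoped Nat

variable {ι σ R : Type*} [Fintype ι]

/-- The content of a colouring `g` of `ι` by `σ`: the number of elements of each colour, as the
exponent vector of the monomial `∏ i, X (g i)`. -/
def content (g : ι → σ) : σ →₀ ℕ := ∑ i, Finsupp.single (g i) 1

lemma content_apply [DecidableEq σ] (g : ι → σ) (s : σ) :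
    content g s = Fintype.card {i // g i = s} := by
  rw [content, Finsupp.finsetSum_apply, Fintype.card_subtype, card_filter]
  simp only [Finsupp.single_apply]

lemma prod_X_eq_monomial_content [CommSemiring R] (g : ι → σ) :
    ∏ i, (X (g i) : MvPolynomial σ R) = monomial (content g) 1 :=
  (monomial_sum_one univ fun i => Finsupp.single (g i) 1).symm

lemma content_comp_perm (g : ι → σ) (ρ : Equiv.Perm ι) : content (g ∘ ρ) = content g :=
  Equiv.sum_comp ρ fun i => Finsupp.single (g i) 1

lemma exists_perm_comp_eq_of_content_eq {f g : ι → σ} (h : content f = content g) :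
    ∃ ρ : Equiv.Perm ι, g ∘ ρ = f := by
  have := Classical.decEq σ
  have fiberEquiv (s : σ) : {i // f i = s} ≃ {i // g i = s} :=
    Fintype.equivOfCardEq (by rw [← content_apply, ← content_apply, h])
  exact ⟨Equiv.ofFiberEquiv fiberEquiv, funext (Equiv.ofFiberEquiv_map fiberEquiv)⟩

variable [DecidableEq ι] [Fintype σ]

lemma card_perm_comp_eq_of_content_eq [DecidableEq σ] {f g : ι → σ} (h : content f = content g) :
    #{ρ : Equiv.Perm ι | g ∘ ρ = f} = ∏ s, (content g s)! := by
  obtain ⟨ρ₀, rfl⟩ := exists_perm_comp_eq_of_content_eq h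
  simp_rw [content_apply, ← DomMulAct.stabilizer_card, Fintype.card_subtype]
  refine card_equiv (Equiv.mulRight ρ₀⁻¹) fun ρ => ?_
  simp only [mem_filter, mem_univ, true_and, Equiv.coe_mulRight, Equiv.Perm.coe_mul,
    ← Function.comp_assoc]
  exact (Equiv.comp_symm_eq ρ₀ g (g ∘ ρ)).symm

variable [CommSemiring R]

lemma sum_perm_comp [DecidableEq σ] (F : (ι → σ) → R) (g : ι → σ) :
    ∑ ρ : Equiv.Perm ι, F (g ∘ ρ)
      = (∏ s, (content g s)! : ℕ) * ∑ f with content f = content g, F f := by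
  rw [← sum_fiberwise_of_maps_to (s := univ) (t := {f | content f = content g})
    (g := fun ρ : Equiv.Perm ι => g ∘ ρ) (by simp [content_comp_perm]), mul_sum]
  refine sum_congr rfl fun f hf => ?_
  rw [sum_congr rfl fun ρ hρ => congrArg F (mem_filter.1 hρ).2, sum_const, nsmul_eq_mul,
    card_perm_comp_eq_of_content_eq (mem_filter.1 hf).2]

lemma coeff_prod_linearForm [DecidableEq σ] (A : Matrix ι σ R) (d : σ →₀ ℕ) :
    coeff d (∏ i, ∑ s, A i s • X s) = ∑ f : ι → σ with content f = d, ∏ i, A i (f i) := by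
  simp_rw [Fintype.prod_sum, prod_smul, prod_X_eq_monomial_content, coeff_sum, coeff_smul,
    coeff_monomial, smul_eq_mul, mul_ite, mul_one, mul_zero, sum_filter]

lemma factorial_mul_coeff_prod_linearForm (A : Matrix ι σ R) (g : ι → σ) :
    (∏ s, (content g s)! : ℕ) * coeff (content g) (∏ i, ∑ s, A i s • X s)
      = (A.submatrix id g).permanent := by
  classical
  rw [coeff_prod_linearForm, ← sum_perm_comp fun f => ∏ i, A i (f i),
    ← Matrix.permanent_transpose]
  rfl

end Permanent

section Sums

lemma derivation_apply_prod {R A M ι : Type*} [CommSemiring R] [CommSemiring A] [AddCommMonoid M]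
    [Algebra R A] [Module A M] [Module R M] [DecidableEq ι] (D : Derivation R A M) (f : ι → A)
    (I : Finset ι) : D (∏ i ∈ I, f i) = ∑ i ∈ I, (∏ j ∈ I.erase i, f j) • D (f i) := by
  induction I using Finset.induction_on with
  | empty => simp
  | insert a I ha ih =>
    rw [prod_insert ha, D.leibniz, ih, sum_insert ha, erase_insert ha, smul_sum, add_comm]
    congr 1
    refine sum_congr rfl fun i hi => ?_
    rw [erase_insert_of_ne (ne_of_mem_of_not_mem hi ha).symm,
      prod_insert (mt mem_of_mem_erase ha), mul_smul]

lemma sum_sum_erase_eq_zero_of_antisymm {ι M : Type*} [DecidableEq ι] [AddCommMonoid M]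
    {I : Finset ι} {F : ι → ι → M}
    (h : ∀ i ∈ I, ∀ j ∈ I, i ≠ j → F i j + F j i = 0) :
    ∑ i ∈ I, ∑ j ∈ I.erase i, F i j = 0 := by
  rw [sum_sigma']
  refine sum_involution (fun p _ => ⟨p.2, p.1⟩) (fun p hp => ?_) (fun p hp _ h => ?_)
    (fun p hp => ?_) fun p _ => rfl
  all_goals grind

end Sums

section Verma

open MvPolynomial

variable {K σ : Type*} [Field K]

/-- The trigonometric kernel `(u + v) / (u - v)`, in terms of which the `r`-matrix, the Bethe ansatz
equations and the eigenvalues are all expressed. -/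
def trigKernel (u v : K) : K := (u + v) / (u - v)

lemma trigKernel_antisymm (u v : K) : trigKernel v u = -trigKernel u v := by
  rw [trigKernel, trigKernel, ← neg_sub u v, div_neg, add_comm]

lemma trigKernel_eq_sub_one {u v : K} (h : u ≠ v) :
    trigKernel u v = 2 * (u / (u - v)) - 1 := by
  have := sub_ne_zero.2 h
  rw [trigKernel]
  field_simp
  ring

lemma trigKernel_eq_one_add {u v : K} (h : u ≠ v) :
    trigKernel u v = 1 + 2 * (v / (u - v)) := by
  have := sub_ne_zero.2 h
  rw [trigKernel]
  field_simp
  ring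

lemma trigKernel_three_point [NeZero (2 : K)] {u v w : K} (huv : u ≠ v) (huw : u ≠ w)
    (hvw : v ≠ w) :
    v / (v - w) * (u - v)⁻¹ - trigKernel v w / 2 * (u - w)⁻¹ = trigKernel u v / 2 * (u - w)⁻¹ := by
  have := sub_ne_zero.2 huv
  have := sub_ne_zero.2 huw
  have := sub_ne_zero.2 hvw
  have : (2 : K) ≠ 0 := two_ne_zero
  simp only [trigKernel]
  field_simp
  ring

lemma trigKernel_four_point {a b v w : K} (hab : a ≠ b) (hav : a ≠ v) (haw : a ≠ w)
    (hbv : b ≠ v) (hbw : b ≠ w) (hvw : v ≠ w) :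
    trigKernel v w * ((a - v)⁻¹ * (b - w)⁻¹ + (b - v)⁻¹ * (a - w)⁻¹)
        - 2 * v / (v - w) * (a - v)⁻¹ * (b - v)⁻¹ - 2 * w / (v - w) * (a - w)⁻¹ * (b - w)⁻¹
      = trigKernel a b * ((a - v)⁻¹ * (b - w)⁻¹ - (b - v)⁻¹ * (a - w)⁻¹) := by
  have := sub_ne_zero.2 hab
  have := sub_ne_zero.2 hav
  have := sub_ne_zero.2 haw
  have := sub_ne_zero.2 hbv
  have := sub_ne_zero.2 hbw
  have := sub_ne_zero.2 hvw
  simp only [trigKernel]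
  field_simp
  ring

variable (Λ : σ → K)

/-- The action of `e11` in the `s`-th factor of the tensor product of Verma modules of highest
weights `Λ`, realized on polynomials as `Λ_s / 2 - x_s ∂_s`. -/
def vermaE11 (s : σ) : Module.End K (MvPolynomial σ K) :=
  (Λ s / 2) • 1 - LinearMap.mulLeft K (X s) * (pderiv s).toLinearMap

/-- The action of `e21` in the `s`-th factor of a tensor product of Verma modules, realized on
polynomials as multiplication by `x_s`. -/
def vermaE21 (s : σ) : Module.End K (MvPolynomial σ K) := LinearMap.mulLeft K (X s)

/-- The action of `e12` in the `s`-th factor of the tensor product of Verma modules of highest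
weights `Λ`, realized on polynomials as `Λ_s ∂_s - x_s ∂_s²`. -/
def vermaE12 (s : σ) : Module.End K (MvPolynomial σ K) :=
  Λ s • (pderiv s).toLinearMap
    - LinearMap.mulLeft K (X s) * (pderiv s).toLinearMap * (pderiv s).toLinearMap

lemma vermaE11_apply (s : σ) (P : MvPolynomial σ K) :
    vermaE11 Λ s P = (Λ s / 2) • P - X s * pderiv s P := rfl

lemma vermaE21_apply (s : σ) (P : MvPolynomial σ K) : vermaE21 s P = X s * P := rfl

lemma vermaE12_apply (s : σ) (P : MvPolynomial σ K) :
    vermaE12 Λ s P = Λ s • pderiv s P - X s * pderiv s (pderiv s P) := rfl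

variable (z : σ → K)

/-- The action of the trigonometric `r`-matrix `r^{(s,p)}(z_s / z_p)` on the tensor product of
Verma modules of highest weights `Λ`, where `Ω₀ / 2` is `e11 ⊗ e11` because `e22 = -e11`. -/
def vermaR (s p : σ) : Module.End K (MvPolynomial σ K) :=
  (z s / (z s - z p)) • (vermaE11 Λ s * vermaE11 Λ p + vermaE12 Λ s * vermaE21 p)
    + (z p / (z s - z p)) • (vermaE11 Λ s * vermaE11 Λ p + vermaE21 s * vermaE12 Λ p)

lemma vermaR_apply {s p : σ} (hsp : s ≠ p) (P : MvPolynomial σ K) :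
    vermaR Λ z s p P = (trigKernel (z s) (z p) * (Λ s / 2 * (Λ p / 2))) • P
      + (X p * (Λ s • ((z s / (z s - z p)) • pderiv s P
          - (trigKernel (z s) (z p) / 2) • pderiv p P))
        + X s * (Λ p • ((z p / (z s - z p)) • pderiv p P
          - (trigKernel (z s) (z p) / 2) • pderiv s P)))
      + X s * X p * (trigKernel (z s) (z p) • pderiv s (pderiv p P)
        - (z s / (z s - z p)) • pderiv s (pderiv s P)
        - (z p / (z s - z p)) • pderiv p (pderiv p P)) := by
  have hX : pderiv s (X p : MvPolynomial σ K) = 0 := pderiv_X_of_ne hsp.symm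
  simp only [vermaR, vermaE11_apply, vermaE12_apply, vermaE21_apply, LinearMap.add_apply,
    LinearMap.smul_apply, Module.End.mul_apply, map_sub, map_smul, Derivation.leibniz, hX,
    smul_eq_mul, mul_zero, add_zero, trigKernel, add_div (z s) (z p)]
  generalize z s / (z s - z p) = a, z p / (z s - z p) = b
  simp only [smul_eq_C_mul, div_eq_mul_inv, C_add, C_mul]
  ring

end Verma

section Bethe

open MvPolynomial

variable {K σ ι : Type*} [Field K] [Fintype σ]

/-- The linear form `∑ s, x_s / (u - z_s)` attached to a Bethe root `u`. -/
def betheForm (z : σ → K) (u : K) : MvPolynomial σ K := ∑ s, (u - z s)⁻¹ • X s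

/-- The product of the linear forms of the Bethe roots `t i`, `i ∈ I`. It is the Bethe vector in the
tensor product of Verma modules; the subsets `I` allow roots to be removed. -/
def bethePoly (z : σ → K) (t : ι → K) (I : Finset ι) : MvPolynomial σ K :=
  ∏ i ∈ I, betheForm z (t i)

variable [DecidableEq ι] (z : σ → K) (t : ι → K)

lemma pderiv_betheForm (u : K) (s : σ) : pderiv s (betheForm z u) = C (u - z s)⁻¹ := by
  classical
  simp [betheForm, pderiv_X, Pi.single_apply, smul_eq_C_mul]

lemma pderiv_bethePoly (I : Finset ι) (s : σ) :
    pderiv s (bethePoly z t I) = ∑ i ∈ I, (t i - z s)⁻¹ • bethePoly z t (I.erase i) := by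
  simp_rw [bethePoly, derivation_apply_prod, pderiv_betheForm, smul_eq_mul, mul_comm _ (C _),
    smul_eq_C_mul]

lemma betheForm_mul_bethePoly_erase {I : Finset ι} {i : ι} (hi : i ∈ I) :
    betheForm z (t i) * bethePoly z t (I.erase i) = bethePoly z t I :=
  mul_prod_erase I (fun i => betheForm z (t i)) hi

variable {z t}

lemma smul_pderiv_sub_bethePoly [NeZero (2 : K)] (hz : Function.Injective z)
    (htz : ∀ i s, t i ≠ z s) {s p : σ} (hsp : s ≠ p) (I : Finset ι) :
    (z s / (z s - z p)) • pderiv s (bethePoly z t I)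
        - (trigKernel (z s) (z p) / 2) • pderiv p (bethePoly z t I)
      = ∑ i ∈ I, (trigKernel (t i) (z s) / 2 * (t i - z p)⁻¹) • bethePoly z t (I.erase i) := by
  simp_rw [pderiv_bethePoly, smul_sum, ← sum_sub_distrib, smul_smul, ← sub_smul,
    trigKernel_three_point (htz _ s) (htz _ p) (hz.ne hsp)]

lemma pderiv_pderiv_bethePoly (I : Finset ι) (s p : σ) :
    pderiv s (pderiv p (bethePoly z t I)) = ∑ i ∈ I, ∑ j ∈ I.erase i,
      ((t i - z p)⁻¹ * (t j - z s)⁻¹) • bethePoly z t ((I.erase i).erase j) := by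
  simp_rw [pderiv_bethePoly, map_sum, Derivation.map_smul, pderiv_bethePoly, smul_sum, smul_smul]

lemma smul_pderiv_pderiv_sub_bethePoly (ht : Function.Injective t) (hz : Function.Injective z)
    (htz : ∀ i s, t i ≠ z s) {s p : σ} (hsp : s ≠ p) (I : Finset ι) :
    trigKernel (z s) (z p) • pderiv s (pderiv p (bethePoly z t I))
        - (z s / (z s - z p)) • pderiv s (pderiv s (bethePoly z t I))
        - (z p / (z s - z p)) • pderiv p (pderiv p (bethePoly z t I))
      = ∑ i ∈ I, ∑ j ∈ I.erase i, (trigKernel (t i) (t j) * ((t i - z s)⁻¹ * (t j - z p)⁻¹)) •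
          bethePoly z t ((I.erase i).erase j) := by
  rw [← sub_eq_zero]
  simp_rw [pderiv_pderiv_bethePoly, smul_sum, ← sum_sub_distrib, smul_smul, ← sub_smul]
  refine sum_sum_erase_eq_zero_of_antisymm fun i _ j _ hij => ?_
  rw [erase_right_comm, ← add_smul, trigKernel_antisymm (t i) (t j)]
  convert zero_smul K (bethePoly z t ((I.erase j).erase i))
  linear_combination
    trigKernel_four_point (ht.ne hij) (htz i s) (htz i p) (htz j s) (htz j p) (hz.ne hsp)

variable (Λ : σ → K)

lemma vermaR_bethePoly [NeZero (2 : K)] (ht : Function.Injective t) (hz : Function.Injective z)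
    (htz : ∀ i s, t i ≠ z s) {s p : σ} (hsp : s ≠ p) (I : Finset ι) :
    vermaR Λ z s p (bethePoly z t I)
      = (trigKernel (z s) (z p) * (Λ s / 2 * (Λ p / 2))) • bethePoly z t I
        + ∑ i ∈ I, ((Λ s * (trigKernel (t i) (z s) / 2) * (t i - z p)⁻¹) •
              (X p * bethePoly z t (I.erase i))
            - (Λ p * (trigKernel (t i) (z p) / 2) * (t i - z s)⁻¹) •
              (X s * bethePoly z t (I.erase i)))
        + ∑ i ∈ I, ∑ j ∈ I.erase i, (trigKernel (t i) (t j) * ((t i - z s)⁻¹ * (t j - z p)⁻¹)) •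
            (X s * X p * bethePoly z t ((I.erase i).erase j)) := by
  have hps : (z p / (z s - z p)) • pderiv p (bethePoly z t I)
      - (trigKernel (z s) (z p) / 2) • pderiv s (bethePoly z t I)
      = -∑ i ∈ I, (trigKernel (t i) (z p) / 2 * (t i - z s)⁻¹) • bethePoly z t (I.erase i) := by
    rw [← smul_pderiv_sub_bethePoly hz htz hsp.symm, trigKernel_antisymm,
      ← neg_sub (z s), div_neg]
    module
  rw [vermaR_apply Λ z hsp, smul_pderiv_sub_bethePoly hz htz hsp, hps,
    smul_pderiv_pderiv_sub_bethePoly ht hz htz hsp]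
  simp_rw [smul_neg, mul_neg, ← sub_eq_add_neg, smul_sum, mul_sum, ← sum_sub_distrib,
    mul_smul_comm, smul_smul, mul_assoc]

lemma sum_smul_X_mul (u a : K) (Q : MvPolynomial σ K) :
    ∑ p, (a * (u - z p)⁻¹) • (X p * Q) = a • (betheForm z u * Q) := by
  simp_rw [betheForm, sum_mul, smul_sum, smul_mul_assoc, smul_smul]

/-- The trigonometric Gaudin operator `K_s(z, μ)` on the tensor product of Verma modules of highest
weights `Λ`, with `(μ / 2) (e11 - e22)` written as `μ e11`. -/
def vermaGaudin [DecidableEq σ] (z : σ → K) (μ : K) (s : σ) : Module.End K (MvPolynomial σ K) :=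
  μ • vermaE11 Λ s + ∑ p ∈ univ.erase s, vermaR Λ z s p

variable [DecidableEq σ]

lemma sum_firstOrder_vermaR_bethePoly (s : σ) (I : Finset ι) :
    ∑ p ∈ univ.erase s, ∑ i ∈ I,
        ((Λ s * (trigKernel (t i) (z s) / 2) * (t i - z p)⁻¹) • (X p * bethePoly z t (I.erase i))
          - (Λ p * (trigKernel (t i) (z p) / 2) * (t i - z s)⁻¹) •
            (X s * bethePoly z t (I.erase i)))
      = (Λ s / 2 * ∑ i ∈ I, trigKernel (t i) (z s)) • bethePoly z t I
        - ∑ i ∈ I, ((t i - z s)⁻¹ * ((∑ p, Λ p * trigKernel (t i) (z p)) / 2)) •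
            (X s * bethePoly z t (I.erase i)) := by
  -- The term `p = s` vanishes, and the sum over all `p` restores the linear form that was removed.
  rw [sum_erase _ (by simp), sum_comm, mul_sum, sum_smul, ← sum_sub_distrib]
  refine sum_congr rfl fun i hi => ?_
  rw [sum_sub_distrib, sum_smul_X_mul, betheForm_mul_bethePoly_erase z t hi, ← sum_smul]
  congr 2
  · ring
  · rw [sum_div, mul_sum]
    exact sum_congr rfl fun p _ => by ring

lemma sum_secondOrder_vermaR_bethePoly (s : σ) (I : Finset ι) :
    ∑ p ∈ univ.erase s, ∑ i ∈ I, ∑ j ∈ I.erase i,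
        (trigKernel (t i) (t j) * ((t i - z s)⁻¹ * (t j - z p)⁻¹)) •
          (X s * X p * bethePoly z t ((I.erase i).erase j))
      = ∑ i ∈ I, ((t i - z s)⁻¹ * ∑ j ∈ I.erase i, trigKernel (t i) (t j)) •
          (X s * bethePoly z t (I.erase i)) := by
  have diagonal_eq_zero : ∑ i ∈ I, ∑ j ∈ I.erase i,
      (trigKernel (t i) (t j) * ((t i - z s)⁻¹ * (t j - z s)⁻¹)) •
        (X s * X s * bethePoly z t ((I.erase i).erase j)) = 0 := by
    refine sum_sum_erase_eq_zero_of_antisymm fun i _ j _ _ => ?_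
    rw [erase_right_comm, trigKernel_antisymm (t i) (t j)]
    module
  rw [sum_erase _ (by exact diagonal_eq_zero), sum_comm]
  refine sum_congr rfl fun i _ => ?_
  rw [sum_comm, mul_sum, sum_smul]
  refine sum_congr rfl fun j hj => ?_
  rw [← betheForm_mul_bethePoly_erase z t hj, mul_left_comm (X s), ← sum_smul_X_mul]
  exact sum_congr rfl fun p _ => by rw [mul_left_comm, ← mul_assoc, mul_comm (X s)]; ring_nf

lemma vermaGaudin_bethePoly [NeZero (2 : K)] (ht : Function.Injective t)
    (hz : Function.Injective z) (htz : ∀ i s, t i ≠ z s) (μ : K) (s : σ) (I : Finset ι) :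
    vermaGaudin Λ z μ s (bethePoly z t I)
      = (Λ s / 2 * (μ + (∑ p ∈ univ.erase s, Λ p * trigKernel (z s) (z p)) / 2
          + ∑ i ∈ I, trigKernel (t i) (z s))) • bethePoly z t I
        - ∑ i ∈ I, ((t i - z s)⁻¹ * (μ + (∑ p, Λ p * trigKernel (t i) (z p)) / 2
            - ∑ j ∈ I.erase i, trigKernel (t i) (t j))) • (X s * bethePoly z t (I.erase i)) := by
  have hscalar : ∑ p ∈ univ.erase s, trigKernel (z s) (z p) * (Λ s / 2 * (Λ p / 2))
      = Λ s / 2 * ((∑ p ∈ univ.erase s, Λ p * trigKernel (z s) (z p)) / 2) := by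
    rw [sum_div, mul_sum]
    exact sum_congr rfl fun p _ => by ring
  rw [vermaGaudin, LinearMap.add_apply, LinearMap.sum_apply,
    sum_congr rfl fun p hp => vermaR_bethePoly Λ ht hz htz (ne_of_mem_erase hp).symm I,
    sum_add_distrib, sum_add_distrib, ← sum_smul, hscalar, sum_firstOrder_vermaR_bethePoly,
    sum_secondOrder_vermaR_bethePoly, LinearMap.smul_apply, vermaE11_apply, pderiv_bethePoly]
  simp_rw [mul_add, mul_sub, add_smul, sub_smul, mul_add, add_smul, sum_sub_distrib,
    sum_add_distrib, mul_sum, smul_sub, smul_sum, mul_smul_comm, smul_smul, mul_comm μ]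
  module

end Bethe

section Realization

open MvPolynomial
open scoped Nat

lemma prod_factorial_add_single {σ : Type*} [Fintype σ] (d : σ →₀ ℕ) (s : σ) :
    ∏ p, ((d + Finsupp.single s 1 : σ →₀ ℕ) p)! = (d s + 1) * ∏ p, (d p)! := by
  classical
  rw [← mul_prod_erase univ _ (mem_univ s), ← mul_prod_erase univ (fun p => (d p)!) (mem_univ s),
    ← mul_assoc]
  congr 1
  · simp [Nat.factorial_succ]
  · exact prod_congr rfl fun p hp => by simp [(ne_of_mem_erase hp).symm]

lemma coeff_X_mul_pderiv {σ R : Type*} [CommSemiring R] (d : σ →₀ ℕ) (s : σ)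
    (P : MvPolynomial σ R) : coeff d (X s * pderiv s P) = d s * coeff d P := by
  classical
  rw [coeff_X_mul']
  split_ifs with hs
  · have hd : d - Finsupp.single s 1 + Finsupp.single s 1 = d :=
      tsub_add_cancel_of_le (Finsupp.single_le_iff.2 (Nat.one_le_iff_ne_zero.2
        (Finsupp.mem_support_iff.1 hs)))
    rw [coeff_pderiv, hd, mul_comm, ← hd]
    simp
  · simp [Finsupp.notMem_support_iff.1 hs]

variable {n : ℕ} {m : Fin n → ℕ}

/-- A basis index of `V`, read as the exponent vector of a monomial. -/
def exponent (l : Idx m) : Fin n →₀ ℕ := Finsupp.equivFunOnFinite.symm fun s => (l s : ℕ)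

lemma exponent_apply (l : Idx m) (s : Fin n) : exponent l s = l s := rfl

lemma exponent_update_add_one (l : Idx m) (s : Fin n) (hs : (l s : ℕ) < m s) :
    exponent (Function.update l s (l s + 1)) = exponent l + Finsupp.single s 1 := by
  ext p
  rcases eq_or_ne p s with rfl | hp
  · simp [exponent_apply, Fin.val_add_one_of_lt (Fin.lt_def.2 hs)]
  · simp [exponent_apply, hp]

lemma exponent_update_sub_one (l : Idx m) (s : Fin n) (hs : l s ≠ 0) :
    exponent (Function.update l s (l s - 1)) + Finsupp.single s 1 = exponent l := by
  ext p
  rcases eq_or_ne p s with rfl | hp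
  · simp only [exponent_apply, Function.update_self, Finsupp.add_apply, Finsupp.single_eq_same,
      Fin.val_sub_one_of_ne_zero hs]
    exact Nat.sub_add_cancel (Nat.one_le_iff_ne_zero.2 (Fin.val_ne_zero_iff.2 hs))
  · simp [exponent_apply, hp]

variable (m)

/-- The projection of the tensor product of Verma modules, realized on polynomials, onto `V`. It
sends `x_s ^ k` to `k!` times the basis vector `v_k`, because `e21 ^ k · v_0 = k! · v_k`. -/
def vermaProj : MvPolynomial (Fin n) ℂ →ₗ[ℂ] TV m where
  toFun P l := (∏ s, (exponent l s)! : ℕ) * coeff (exponent l) P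
  map_add' P Q := by ext l; simp only [coeff_add, mul_add, Pi.add_apply]
  map_smul' a P := by
    ext l
    simp only [coeff_smul, smul_eq_mul, RingHom.id_apply, Pi.smul_apply, mul_left_comm]

lemma vermaProj_apply (P : MvPolynomial (Fin n) ℂ) (l : Idx m) :
    vermaProj m P l = (∏ s, (exponent l s)! : ℕ) * coeff (exponent l) P := rfl

lemma E11_vermaProj (s : Fin n) (P : MvPolynomial (Fin n) ℂ) :
    E11 m s (vermaProj m P) = vermaProj m (vermaE11 (fun s => (m s : ℂ)) s P) := by
  ext l
  change ((m s : ℂ) - 2 * ((l s : ℕ) : ℂ)) / 2 * vermaProj m P l = _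
  rw [vermaE11_apply, vermaProj_apply, vermaProj_apply, coeff_sub, coeff_smul, coeff_X_mul_pderiv,
    exponent_apply, smul_eq_mul]
  ring

lemma E22_eq_neg_E11 (s : Fin n) : E22 m s = -E11 m s := by
  ext v l
  exact neg_mul _ _

lemma E21_vermaProj (s : Fin n) (P : MvPolynomial (Fin n) ℂ) :
    E21 m s (vermaProj m P) = vermaProj m (vermaE21 s P) := by
  ext l
  change ((l s : ℕ) : ℂ) * vermaProj m P (Function.update l s (l s - 1)) = _
  rw [vermaE21_apply, vermaProj_apply, vermaProj_apply]
  rcases eq_or_ne (l s) 0 with hs | hs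
  · simp [coeff_X_mul', exponent_apply, hs]
  · have hls : (l s : ℕ) = exponent (Function.update l s (l s - 1)) s + 1 := by
      rw [← exponent_apply l, ← exponent_update_sub_one l s hs]
      simp
    rw [← exponent_update_sub_one l s hs, mul_comm (X s), coeff_mul_X,
      prod_factorial_add_single, Nat.cast_mul, ← hls, mul_assoc]

lemma E12_vermaProj (s : Fin n) (P : MvPolynomial (Fin n) ℂ) :
    E12 m s (vermaProj m P) = vermaProj m (vermaE12 (fun s => (m s : ℂ)) s P) := by
  ext l
  change ((m s : ℂ) - ((l s : ℕ) : ℂ)) * vermaProj m P (Function.update l s (l s + 1)) = _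
  rw [vermaE12_apply, vermaProj_apply, vermaProj_apply, coeff_sub, coeff_smul, coeff_X_mul_pderiv,
    coeff_pderiv, exponent_apply, smul_eq_mul]
  rcases (Fin.is_le (l s)).eq_or_lt with hs | hs
  · rw [hs]
    ring
  · rw [exponent_update_add_one l s hs, prod_factorial_add_single, exponent_apply]
    push_cast
    ring

lemma rOp_vermaProj {z : Fin n → ℂ} {s p : Fin n} (hzp : z p ≠ 0)
    (P : MvPolynomial (Fin n) ℂ) :
    rOp m s p (z s / z p) (vermaProj m P)
      = vermaProj m (vermaR (fun s => (m s : ℂ)) z s p P) := by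
  have hcoeff : (z s / z p - 1)⁻¹ = z p / (z s - z p) := by
    rw [div_sub_one hzp, inv_div]
  have hcoeff' : z p / (z s - z p) * (z s / z p) = z s / (z s - z p) := by
    rw [div_mul_div_comm, mul_comm, mul_div_mul_right _ _ hzp]
  have hOm0 : (2 : ℂ)⁻¹ • Om0 m s p = E11 m s * E11 m p := by
    rw [Om0, E22_eq_neg_E11, E22_eq_neg_E11,
      show -E11 m s * -E11 m p = E11 m s * E11 m p from neg_mul_neg (E11 m s) (E11 m p)]
    module
  rw [rOp, hcoeff, hOm0, smul_add, smul_smul, hcoeff', Om12, Om21, vermaR]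
  simp only [LinearMap.add_apply, LinearMap.smul_apply, Module.End.mul_apply, map_add, map_smul,
    E11_vermaProj, E12_vermaProj, E21_vermaProj]

lemma Kop_vermaProj {z : Fin n → ℂ} (hz0 : ∀ s, z s ≠ 0) (μ : ℂ) (s : Fin n)
    (P : MvPolynomial (Fin n) ℂ) :
    Kop m z μ s (vermaProj m P)
      = vermaProj m (vermaGaudin (fun s => (m s : ℂ)) z μ s P) := by
  have hE : (μ / 2) • (E11 m s - E22 m s) = μ • E11 m s := by
    rw [E22_eq_neg_E11]
    module
  simp only [Kop, hE, vermaGaudin, LinearMap.add_apply, LinearMap.smul_apply, LinearMap.sum_apply,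
    E11_vermaProj, rOp_vermaProj m (hz0 _), map_add, map_smul, map_sum]

variable {m} {m' : ℕ}

/-- The partition of `{0, …, m' - 1}` into consecutive blocks of lengths `l s`, as used in the
products defining `omegaCoeff`. -/
def blockEquiv (l : Idx m) (hl : ∑ s, (l s : ℕ) = m') : (Σ s, Fin (l s)) ≃ Fin m' :=
  finSigmaFinEquiv.trans (finCongr hl)

lemma blockEquiv_val (l : Idx m) (hl : ∑ s, (l s : ℕ) = m') (s : Fin n) (i : Fin (l s)) :
    (blockEquiv l hl ⟨s, i⟩ : ℕ) = pref m l s + i := by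
  have hlt : ({u | u < s} : Finset (Fin n)) = univ.map (Fin.castLEEmb s.2.le) := by
    ext u
    simp only [mem_filter, mem_univ, true_and, mem_map, Fin.castLEEmb_apply]
    exact ⟨fun hu => ⟨⟨u, hu⟩, rfl⟩, by rintro ⟨a, rfl⟩; exact a.2⟩
  rw [blockEquiv, Equiv.trans_apply, finCongr_apply, Fin.val_cast, finSigmaFinEquiv_apply, pref,
    hlt, sum_map]
  rfl

lemma content_fst_blockEquiv_symm (l : Idx m) (hl : ∑ s, (l s : ℕ) = m') :
    content (fun i => ((blockEquiv l hl).symm i).1) = exponent l := by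
  rw [content, ← Equiv.sum_comp (blockEquiv l hl)]
  simp only [Equiv.symm_apply_apply, Fintype.sum_sigma, sum_const, card_univ, Fintype.card_fin,
    Finsupp.smul_single_one]
  exact Finsupp.univ_sum_single (exponent l)

lemma omegaCoeff_eq_permanent (z : Fin n → ℂ) (t : Fin m' → ℂ) (l : Idx m)
    (hl : ∑ s, (l s : ℕ) = m') :
    omegaCoeff m z t l
      = (Matrix.of fun i j => (t i - z ((blockEquiv l hl).symm j).1)⁻¹).permanent := by
  refine sum_congr rfl fun ρ _ => ?_
  rw [← Equiv.prod_comp (blockEquiv l hl), Fintype.prod_sigma]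
  refine prod_congr rfl fun s _ => ?_
  rw [prod_Ico_eq_prod_range, Nat.add_sub_cancel_left, prod_range]
  refine prod_congr rfl fun i _ => ?_
  rw [← blockEquiv_val l hl, extt, dif_pos (Fin.is_lt _), Matrix.of_apply, Equiv.symm_apply_apply]
  rfl

lemma betheVec_eq_vermaProj (z : Fin n → ℂ) (t : Fin m' → ℂ) :
    betheVec m z t = vermaProj m (bethePoly z t univ) := by
  ext l
  rw [betheVec, vermaProj_apply]
  split_ifs with hl
  · rw [omegaCoeff_eq_permanent z t l hl, ← content_fst_blockEquiv_symm l hl]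
    exact (factorial_mul_coeff_prod_linearForm (Matrix.of fun i s => (t i - z s)⁻¹) _).symm
  · have isHomogeneous : (bethePoly z t univ).IsHomogeneous (∑ _i : Fin m', 1) :=
      IsHomogeneous.prod _ _ _ fun i _ => IsHomogeneous.sum _ _ _ fun s _ =>
        (homogeneousSubmodule (Fin n) ℂ 1).smul_mem _ (isHomogeneous_X ℂ s)
    rw [isHomogeneous.coeff_eq_zero, mul_zero]
    simpa [Finsupp.degree_eq_sum, exponent_apply] using hl

end Realization

section Spectrum

variable {n : ℕ} {m : Fin n → ℕ} {z : Fin n → ℂ} {μ : ℂ} {m' : ℕ} {t : Fin m' → ℂ}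

lemma BAE.sum_trigKernel (ht : BAE m z μ t) (i : Fin m') :
    μ + (∑ p, (m p : ℂ) * trigKernel (t i) (z p)) / 2
      = ∑ j ∈ univ.erase i, trigKernel (t i) (t j) := by
  obtain ⟨htinj, ht0, htz, hbae⟩ := ht
  have hz : ∑ p, (m p : ℂ) * trigKernel (t i) (z p)
      = 2 * (t i * ∑ p, (m p : ℂ) / (t i - z p)) - ∑ p, (m p : ℂ) := by
    rw [mul_sum, mul_sum, ← sum_sub_distrib]
    exact sum_congr rfl fun p _ => by rw [trigKernel_eq_sub_one (htz i p)]; ring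
  have ht : ∑ j ∈ univ.erase i, trigKernel (t i) (t j)
      = t i * (∑ j ∈ univ.erase i, 2 / (t i - t j)) - (m' - 1) := by
    have hcard : ((m' : ℂ) - 1) = ∑ _j ∈ univ.erase i, (1 : ℂ) := by
      simp [Nat.cast_sub (Nat.one_le_iff_ne_zero.2 (Fin.pos i).ne')]
    rw [hcard, mul_sum, ← sum_sub_distrib]
    refine sum_congr rfl fun j hj => ?_
    rw [trigKernel_eq_sub_one (htinj.ne (ne_of_mem_erase hj).symm)]
    ring
  have hmul := congrArg (t i * ·) (hbae i)
  simp only [mul_add, mul_sub, mul_div_cancel₀ _ (ht0 i), mul_zero] at hmul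
  rw [hz, ht]
  linear_combination -hmul

lemma kEig_eq_trigKernel (hz : Function.Injective z) (htz : ∀ i s, t i ≠ z s) (s : Fin n) :
    kEig m z μ t s = (m s : ℂ) / 2 * (μ
      + (∑ p ∈ univ.erase s, (m p : ℂ) * trigKernel (z s) (z p)) / 2
      + ∑ i, trigKernel (t i) (z s)) := by
  have hzsum : ∑ p ∈ univ.erase s, (m p : ℂ) * trigKernel (z s) (z p)
      = 2 * (∑ p ∈ univ.erase s, (m p : ℂ) * z s / (z s - z p)) - (∑ p, (m p : ℂ) - m s) := by
    rw [← sum_erase_eq_sub (mem_univ s), mul_sum, ← sum_sub_distrib]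
    refine sum_congr rfl fun p hp => ?_
    rw [trigKernel_eq_sub_one (hz.ne (ne_of_mem_erase hp).symm)]
    ring
  have htsum : ∑ i, trigKernel (t i) (z s) = m' + 2 * ∑ i, z s / (t i - z s) := by
    simp [trigKernel_eq_one_add (htz _ s), sum_add_distrib, mul_sum]
  rw [hzsum, htsum, kEig]
  ring

lemma BAE.vermaGaudin_bethePoly_univ (hz : Function.Injective z) (ht : BAE m z μ t) (s : Fin n) :
    vermaGaudin (fun s => (m s : ℂ)) z μ s (bethePoly z t univ)
      = kEig m z μ t s • bethePoly z t univ := by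
  rw [vermaGaudin_bethePoly _ ht.1 hz ht.2.2.1, kEig_eq_trigKernel hz ht.2.2.1]
  simp [ht.sum_trigKernel]

end Spectrum

/-- Theorem 5.3 of the paper.  If `t⁰` is a solution of the Bethe ansatz
equations for `(z; μ; V[ν])`, `ν = M - 2m'`, then for each `s` the Bethe vector is an
eigenvector of the trigonometric Gaudin operator:
`K_s(z,μ) ω(t⁰,z) = k_s(t⁰,z,μ) ω(t⁰,z)` with
`k_s = (m_s/2)[(μ - ν/2 + m_s/2) + Σ_{p≠s} m_p z_s/(z_s - z_p) + 2Σ_i z_s/(t⁰_i - z_s)]`. -/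
theorem statement5
    (n : ℕ) (hn : 1 < n) (m : Fin n → ℕ) (hm : ∀ s, 0 < m s)
    (M : ℕ) (hM : M = ∑ s, m s)
    (z : Fin n → ℂ) (hz0 : ∀ s, z s ≠ 0) (hz : Function.Injective z)
    (μ : ℂ) (m' : ℕ) (ν : ℤ) (hν : ν = (M : ℤ) - 2 * (m' : ℤ))
    (t : Fin m' → ℂ) (ht : BAE m z μ t) :
    ∀ s : Fin n, Kop m z μ s (betheVec m z t) = kEig m z μ t s • betheVec m z t := by
  intro s
  rw [betheVec_eq_vermaProj, Kop_vermaProj m hz0, ht.vermaGaudin_bethePoly_univ hz, map_smul]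


end
end Paper
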